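/- For every integer k ≥ 3 and every odd positive integer n, the difference A_n(12⋯k) - A_n(12⋯(k-2)k(k-1)) equals the number of alternating, 12⋯k-avoiding permutations of length n whose last entry has rank k-1. -/

import Mathlib

open Function

def Contains {n k : ℕ} (p : Fin n → Fin n) (q : Fin k → Fin k) : Prop :=
  ∃ f : Fin k → Fin n, StrictMono f ∧ ∀ a b : Fin k, q a < q b ↔ p (f a) < p (f b)

def Avoids {n k : ℕ} (p : Fin n → Fin n) (q : Fin k → Fin k) : Prop :=
  ¬ Contains p q

noncomputable def rank {n : ℕ} (p : Fin n → Fin n) (i : Fin n) : ℕ :=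
  sSup {m | ∃ f : Fin m → Fin n, StrictMono f ∧ StrictMono (p ∘ f) ∧
    ∃ hm : 0 < m, f ⟨m - 1, Nat.sub_lt hm Nat.one_pos⟩ = i}

noncomputable def corank {n : ℕ} (p : Fin n → Fin n) (i : Fin n) : ℕ :=
  sSup {m | ∃ f : Fin m → Fin n, StrictMono f ∧ StrictMono (p ∘ f) ∧
    ∃ hm : 0 < m, f ⟨0, hm⟩ = i}

def Alternating {n : ℕ} (p : Fin n → Fin n) : Prop :=
  ∀ (i : ℕ) (h : i + 1 < n), p ⟨i, by omega⟩ < p ⟨i + 1, h⟩ ↔ i % 2 = 0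

def IsPeak {n : ℕ} (p : Fin n → Fin n) (i : Fin n) : Prop :=
  (∀ _ : 0 < i.1, p ⟨i.1 - 1, lt_of_le_of_lt (Nat.sub_le _ _) i.2⟩ < p i) ∧
  (∀ h : i.1 + 1 < n, p ⟨i.1 + 1, h⟩ < p i)

def IsValley {n : ℕ} (p : Fin n → Fin n) (i : Fin n) : Prop :=
  (∀ _ : 0 < i.1, p i < p ⟨i.1 - 1, lt_of_le_of_lt (Nat.sub_le _ _) i.2⟩) ∧
  (∀ h : i.1 + 1 < n, p i < p ⟨i.1 + 1, h⟩)

def RR {n : ℕ} (p : Fin n → Fin n) : ℕ → Fin n → Prop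
  | 0, _ => True
  | r + 1, i => ∃ j, j < i ∧ p j < p i ∧ RR p r j

theorem RR_down {n : ℕ} (p : Fin n → Fin n) : ∀ (r : ℕ) (i : Fin n), RR p (r + 1) i → RR p r i
  | 0, _, _ => trivial
  | r + 1, _, ⟨j, h1, h2, h3⟩ => ⟨j, h1, h2, RR_down p r j h3⟩

theorem RR_chain {n : ℕ} (p : Fin n → Fin n) (r : ℕ) : ∀ (i : Fin n), RR p r i ↔
    ∃ f : Fin (r + 1) → Fin n, StrictMono f ∧ StrictMono (p ∘ f) ∧ f (Fin.last r) = i := by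
  induction r with
  | zero =>
    intro i
    refine ⟨fun _ => ⟨fun _ => i, ?_, ?_, rfl⟩, fun _ => trivial⟩
    · intro a b hab; exact absurd hab (by omega)
    · intro a b hab; exact absurd hab (by omega)
  | succ r ih =>
    intro i
    constructor
    · rintro ⟨j, h1, h2, h3⟩
      obtain ⟨f, hf, hpf, hl⟩ := (ih j).1 h3
      refine ⟨Fin.snoc f i, ?_, ?_, by simp⟩
      · rw [Fin.strictMono_iff_lt_succ]
        intro a
        induction a using Fin.lastCases with
        | last => rw [Fin.succ_last]; simpa [hl] using h1
        | cast a =>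
          rw [Fin.succ_castSucc, Fin.snoc_castSucc, Fin.snoc_castSucc]; exact hf (Fin.castSucc_lt_succ)
      · rw [Fin.strictMono_iff_lt_succ]
        intro a
        induction a using Fin.lastCases with
        | last => rw [Fin.succ_last]; simpa [hl] using h2
        | cast a =>
          rw [Fin.succ_castSucc]; simp only [Function.comp_apply, Fin.snoc_castSucc]; exact hpf (Fin.castSucc_lt_succ)
    · rintro ⟨f, hf, hpf, hl⟩
      refine ⟨f (Fin.last r).castSucc, ?_, ?_, (ih _).2 ⟨fun x => f x.castSucc, ?_, ?_, rfl⟩⟩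
      · rw [← hl]; exact hf (Fin.castSucc_lt_last _)
      · rw [← hl]; exact hpf (Fin.castSucc_lt_last _)
      · exact fun a b h => hf (by simpa using h)
      · exact fun a b h => hpf (by simpa using h)

theorem contains_id {n r : ℕ} (p : Fin n → Fin n) :
    Contains p (id : Fin (r + 1) → Fin (r + 1)) ↔ ∃ i, RR p r i := by
  constructor
  · rintro ⟨f, hf, h⟩
    exact ⟨_, (RR_chain p r _).2 ⟨f, hf, fun a b hab => (h a b).1 hab, rfl⟩⟩
  · rintro ⟨i, hi⟩
    obtain ⟨f, hf, hpf, -⟩ := (RR_chain p r _).1 hi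
    exact ⟨f, hf, fun a b => (hpf.lt_iff_lt (a := a) (b := b)).symm⟩

theorem swap_val {r : ℕ} (x : Fin (r + 3)) :
    (Equiv.swap (⟨r + 1, by omega⟩ : Fin (r + 3)) ⟨r + 2, by omega⟩ x).1 =
      if x.1 = r + 1 then r + 2 else if x.1 = r + 2 then r + 1 else x.1 := by
  rw [Equiv.swap_apply_def]
  simp only [Fin.ext_iff]
  split_ifs <;> rfl

theorem contains_swap {n r : ℕ} (p : Fin n → Fin n) :
    Contains p ⇑(Equiv.swap (⟨r + 1, by omega⟩ : Fin (r + 3)) ⟨r + 2, by omega⟩) ↔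
      ∃ j a b, RR p r j ∧ j < a ∧ a < b ∧ p j < p b ∧ p b < p a := by
  constructor
  · rintro ⟨f, hf, h⟩
    refine ⟨f ⟨r, by omega⟩, f ⟨r + 1, by omega⟩, f ⟨r + 2, by omega⟩, ?_, ?_, ?_, ?_, ?_⟩
    · refine (RR_chain p r _).2 ⟨fun x => f ⟨x.1, by omega⟩, ?_, ?_, rfl⟩
      · intro a b hab
        exact hf (by simpa using hab)
      · intro a b hab
        refine (h _ _).1 ?_
        rw [Fin.lt_def, swap_val, swap_val]
        have := Fin.lt_def.1 hab
        have := b.2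
        simp only
        split_ifs <;> omega
    · exact hf (by simp)
    · exact hf (by simp)
    · refine (h _ _).1 ?_
      rw [Fin.lt_def, swap_val, swap_val]; simp
    · refine (h _ _).1 ?_
      rw [Fin.lt_def, swap_val, swap_val]; simp
  · rintro ⟨j, a, b, hj, hja, hab, hjb, hba⟩
    obtain ⟨g, hg, hpg, hl⟩ := (RR_chain p r _).1 hj
    have hgj : ∀ x, g x ≤ j := fun x => hl ▸ hg.monotone (Fin.le_last x)
    have hpgj : ∀ x, p (g x) ≤ p j := fun x => hl ▸ hpg.monotone (Fin.le_last x)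
    let f : Fin (r + 3) → Fin n := fun x => if h : x.1 < r + 1 then g ⟨x.1, h⟩ else
      if x.1 = r + 1 then a else b
    have key : ∀ x y, Equiv.swap (⟨r + 1, by omega⟩ : Fin (r + 3)) ⟨r + 2, by omega⟩ x <
        Equiv.swap (⟨r + 1, by omega⟩ : Fin (r + 3)) ⟨r + 2, by omega⟩ y → p (f x) < p (f y) := by
      intro x y hxy
      rw [Fin.lt_def, swap_val, swap_val] at hxy
      have := x.2
      have := y.2
      by_cases hx : x.1 < r + 1
      · by_cases hy : y.1 < r + 1
        · simp only [f, hx, hy, dif_pos]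
          apply hpg
          rw [Fin.lt_def]
          simp only
          split_ifs at hxy <;> omega
        · have h1 := hpgj ⟨x.1, hx⟩
          simp only [f, hx, hy, dif_pos, dif_neg, not_false_iff]
          split_ifs
          · exact h1.trans_lt (hjb.trans hba)
          · exact h1.trans_lt hjb
      · have hy : y.1 = r + 1 := by split_ifs at hxy <;> omega
        have hx2 : x.1 = r + 2 := by split_ifs at hxy <;> omega
        simp only [f, hy, hx2]
        simpa using hba
    refine ⟨f, ?_, ?_⟩
    · intro x y hxy
      have := Fin.lt_def.1 hxy
      have := x.2
      have := y.2
      by_cases hx : x.1 < r + 1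
      · by_cases hy : y.1 < r + 1
        · simp only [f, hx, hy, dif_pos]
          apply hg
          simpa using hxy
        · have h1 := hgj ⟨x.1, hx⟩
          simp only [f, hx, hy, dif_pos, dif_neg, not_false_iff]
          split_ifs
          · exact h1.trans_lt hja
          · exact h1.trans_lt (hja.trans hab)
      · have hy : y.1 = r + 2 := by omega
        have hx2 : x.1 = r + 1 := by omega
        simp only [f, hy, hx2]
        simpa using hab
    · intro x y
      refine ⟨key x y, fun h => ?_⟩
      by_contra hc
      rcases (not_lt.1 hc).lt_or_eq with h2 | h2
      · exact absurd (key _ _ h2) (not_lt.2 h.le)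
      · rw [Equiv.swap _ _ |>.injective h2] at h
        exact lt_irrefl _ h

theorem rank_eq {n r : ℕ} (p : Fin n → Fin n) (i : Fin n) (h : ¬ RR p (r + 1) i) :
    rank p i = r + 1 ↔ RR p r i := by
  have hmem : ∀ m, (m + 1) ∈ {m | ∃ f : Fin m → Fin n, StrictMono f ∧ StrictMono (p ∘ f) ∧
      ∃ hm : 0 < m, f ⟨m - 1, Nat.sub_lt hm Nat.one_pos⟩ = i} ↔ RR p m i := by
    intro m
    rw [RR_chain]
    constructor
    · rintro ⟨f, h1, h2, _, h3⟩; exact ⟨f, h1, h2, h3⟩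
    · rintro ⟨f, h1, h2, h3⟩; exact ⟨f, h1, h2, Nat.succ_pos _, h3⟩
  have hdown : ∀ d m, RR p (m + d) i → RR p m i := by
    intro d
    induction d with
    | zero => exact fun m h => h
    | succ d ih => exact fun m h => ih m (RR_down p _ i h)
  constructor
  · intro hr
    rw [← hmem, ← hr]
    apply Nat.sSup_mem
    · exact ⟨0 + 1, (hmem 0).2 trivial⟩
    · refine ⟨n, ?_⟩
      rintro m ⟨f, hf, -⟩
      simpa using Fintype.card_le_of_injective f hf.injective
  · intro hr
    apply IsGreatest.csSup_eq
    refine ⟨(hmem r).2 hr, ?_⟩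
    intro m hm
    by_contra hc
    obtain ⟨d, rfl⟩ : ∃ d, m = (r + 1 + d) + 1 := ⟨m - (r + 2), by omega⟩
    exact h (hdown d _ ((hmem _).1 hm))

/-- high entries have a low witness -/
theorem low_wit {n r : ℕ} (p : Fin n → Fin n) : ∀ (i : Fin n), RR p (r + 1) i →
    ∃ j, j < i ∧ p j < p i ∧ RR p r j ∧ ¬ RR p (r + 1) j := by
  intro i
  induction i using WellFoundedLT.induction with
  | ind i ih =>
    rintro ⟨j, h1, h2, h3⟩
    by_cases hj : RR p (r + 1) j
    · obtain ⟨l, a, b, c⟩ := ih j h1 hj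
      exact ⟨l, a.trans h1, b.trans h2, c⟩
    · exact ⟨j, h1, h2, h3, hj⟩

def SameLow {n : ℕ} (r : ℕ) (p p' : Fin n → Fin n) : Prop :=
  (∀ i, RR p (r + 1) i ↔ RR p' (r + 1) i) ∧ ∀ i, ¬ RR p (r + 1) i → p i = p' i

theorem SameLow.symm {n r : ℕ} {p p' : Fin n → Fin n} (h : SameLow r p p') : SameLow r p' p :=
  ⟨fun i => (h.1 i).symm, fun i hi => (h.2 i (fun h' => hi ((h.1 i).1 h'))).symm⟩

theorem SameLow.trans {n r : ℕ} {p p' p'' : Fin n → Fin n} (h : SameLow r p p') (h' : SameLow r p' p'') :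
    SameLow r p p'' :=
  ⟨fun i => (h.1 i).trans (h'.1 i),
    fun i hi => (h.2 i hi).trans (h'.2 i (fun h2 => hi ((h.1 i).2 h2)))⟩

theorem RR_transfer {n r : ℕ} {p p' : Fin n → Fin n}
    (h2 : ∀ i, ¬ RR p (r + 1) i → p i = p' i) : ∀ s, s ≤ r → ∀ i, ¬ RR p (r + 1) i →
    RR p s i → RR p' s i := by
  intro s
  induction s with
  | zero => exact fun _ _ _ _ => trivial
  | succ s ih =>
    rintro hs i hi ⟨j, a, b, c⟩
    have hj : ¬ RR p (r + 1) j := by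
      intro hj
      obtain ⟨l, x, y, z, _⟩ := low_wit p j hj
      exact hi ⟨l, x.trans a, y.trans b, z⟩
    exact ⟨j, a, by rw [← h2 i hi, ← h2 j hj]; exact b, ih (by omega) j hj c⟩

/-- eligibility criterion -/
theorem rel_of {n r : ℕ} {p p' : Fin n → Fin n}
    (h2 : ∀ i, ¬ RR p (r + 1) i → p i = p' i)
    (h1 : ∀ i, RR p (r + 1) i → ∃ j, j < i ∧ p j < p' i ∧ RR p r j ∧ ¬ RR p (r + 1) j) :
    SameLow r p p' := by
  refine ⟨fun i => ⟨?_, ?_⟩, h2⟩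
  · intro hi
    obtain ⟨j, a, b, c, d⟩ := h1 i hi
    exact ⟨j, a, by rw [← h2 j d]; exact b, RR_transfer h2 r le_rfl j d c⟩
  · intro hi
    by_contra hc
    have key : ∀ s i, ¬ RR p (r + 1) i → RR p' s i → RR p s i := by
      intro s
      induction s with
      | zero => exact fun _ _ _ => trivial
      | succ s ih =>
        rintro i hi ⟨j, a, b, c⟩
        have hj : ¬ RR p (r + 1) j := by
          intro hj
          obtain ⟨l, x, y, z, _⟩ := h1 j hj
          exact hi ⟨l, x.trans a, by rw [h2 i hi]; exact y.trans b, z⟩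
        exact ⟨j, a, by rw [h2 i hi, h2 j hj]; exact b, ih j hj c⟩
    exact hc (key _ i hc hi)

def AvI {n : ℕ} (r : ℕ) (p : Fin n → Fin n) : Prop :=
  ∀ a b, a < b → p a < p b → ¬ RR p (r + 1) a

def AvS {n : ℕ} (r : ℕ) (p : Fin n → Fin n) : Prop :=
  ∀ j a b, RR p r j → j < a → a < b → p j < p b → ¬ p b < p a

theorem uniq_aux {n r : ℕ} {p p' : Fin n → Fin n} (hp : Bijective p) (hp' : Bijective p')
    (h : SameLow r p p') (P : (Fin n → Fin n) → Prop)
    (hP : P p) (hP' : P p')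
    (H : ∀ p p' : Fin n → Fin n, Bijective p → Bijective p' → SameLow r p p' → P p → P p' →
      ∀ i, (∀ j, j < i → p j = p' j) → RR p (r + 1) i → ¬ p i < p' i) : p = p' := by
  funext i
  induction i using WellFoundedLT.induction with
  | ind i ih =>
    by_contra hne
    have hi : RR p (r + 1) i := by
      by_contra hc
      exact hne (h.2 i hc)
    rcases lt_or_gt_of_ne hne with hlt | hlt
    · exact H p p' hp hp' h hP hP' i ih hi hlt
    · exact H p' p hp' hp h.symm hP' hP i (fun j hj => (ih j hj).symm) ((h.1 i).1 hi) hlt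

theorem later {n : ℕ} {p p' : Fin n → Fin n} (hp : Bijective p) (hp' : Bijective p')
    (i : Fin n) (ih : ∀ j, j < i → p j = p' j) (hne : p i ≠ p' i) :
    ∃ b, i < b ∧ p b = p' i := by
  obtain ⟨b, hb⟩ := hp.2 (p' i)
  refine ⟨b, ?_, hb⟩
  rcases lt_trichotomy i b with h | h | h
  · exact h
  · subst h; exact absurd hb hne
  · rw [ih b h] at hb
    exact absurd (hp'.1 hb) h.ne

theorem uniq_I {n r : ℕ} {p p' : Fin n → Fin n} (hp : Bijective p) (hp' : Bijective p')
    (h : SameLow r p p') (hP : AvI r p) (hP' : AvI r p') : p = p' := by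
  refine uniq_aux hp hp' h (AvI r) hP hP' ?_
  intro p p' hp hp' h hP hP' i ih hi hlt
  obtain ⟨b, hb, hb2⟩ := later hp hp' i ih hlt.ne
  exact hP i b hb (by rw [hb2]; exact hlt) hi

theorem uniq_S {n r : ℕ} {p p' : Fin n → Fin n} (hp : Bijective p) (hp' : Bijective p')
    (h : SameLow r p p') (hP : AvS r p) (hP' : AvS r p') : p = p' := by
  refine uniq_aux hp hp' h (AvS r) hP hP' ?_
  intro p p' hp hp' h hP hP' i ih hi hlt
  obtain ⟨b, hb, hb2⟩ := later hp' hp i (fun j hj => (ih j hj).symm) hlt.ne'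
  obtain ⟨j, h1, h2, h3, h4⟩ := low_wit p i hi
  refine hP' j i b (RR_transfer h.2 r le_rfl j h4 h3) h1 hb ?_ (by rw [hb2]; exact hlt)
  rw [hb2, ← ih j h1]; exact h2

theorem rel_swap {n r : ℕ} {p : Fin n → Fin n} (j a b : Fin n) (hj : RR p r j)
    (hj' : ¬ RR p (r + 1) j) (hja : j < a) (hjb : j < b) (hpa : p j < p a) (hpb : p j < p b) :
    SameLow r p (p ∘ Equiv.swap a b) := by
  apply rel_of
  · intro i hi
    have h1 : i ≠ a := by rintro rfl; exact hi ⟨j, hja, hpa, hj⟩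
    have h2 : i ≠ b := by rintro rfl; exact hi ⟨j, hjb, hpb, hj⟩
    simp [Equiv.swap_apply_of_ne_of_ne h1 h2]
  · intro i hi
    by_cases h1 : i = a
    · subst h1; exact ⟨j, hja, by simpa using hpb, hj, hj'⟩
    by_cases h2 : i = b
    · subst h2; exact ⟨j, hjb, by simpa using hpa, hj, hj'⟩
    simpa [Equiv.swap_apply_of_ne_of_ne h1 h2] using low_wit p i hi

theorem exists_S {n : ℕ} (r : ℕ) (p : Fin n → Fin n) (hp : Bijective p) :
    ∃ p', Bijective p' ∧ SameLow r p p' ∧ AvS r p' := by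
  have hfin : {q : Lex (Fin n → Fin n) | Bijective (ofLex q) ∧ SameLow r p (ofLex q)}.Finite :=
    @Set.toFinite _ _ (@Finite.Set.subset _ Set.univ _
      (@Finite.of_equiv _ _ (inferInstanceAs (Finite (Fin n → Fin n))) (toLex.trans (Equiv.Set.univ _).symm)) (Set.subset_univ _))
  obtain ⟨q, hq⟩ := hfin.exists_minimal ⟨toLex p, hp, fun _ => Iff.rfl, fun _ _ => rfl⟩
  refine ⟨ofLex q, hq.1.1, hq.1.2, ?_⟩
  intro j a b hj hja hab hjb hba
  have : ∃ j, RR (ofLex q) r j ∧ ¬ RR (ofLex q) (r + 1) j ∧ j < a ∧ ofLex q j < ofLex q b := by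
    by_cases hj' : RR (ofLex q) (r + 1) j
    · obtain ⟨l, h1, h2, h3, h4⟩ := low_wit _ j hj'
      exact ⟨l, h3, h4, h1.trans hja, h2.trans hjb⟩
    · exact ⟨j, hj, hj', hja, hjb⟩
  obtain ⟨l, h1, h2, h3, h4⟩ := this
  have hlt := Pi.lex_desc (f := ofLex q) hab.le hba
  have := hq.2 (y := toLex (ofLex q ∘ Equiv.swap a b)) ⟨hq.1.1.comp (Equiv.bijective _),
    hq.1.2.trans (rel_swap l a b h1 h2 h3 (h3.trans hab) (h4.trans hba) h4)⟩ hlt.le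
  exact absurd hlt (not_lt.2 this)

theorem exists_I {n : ℕ} (r : ℕ) (p : Fin n → Fin n) (hp : Bijective p) :
    ∃ p', Bijective p' ∧ SameLow r p p' ∧ AvI r p' := by
  have hfin : {q : Lex (Fin n → Fin n) | Bijective (ofLex q) ∧ SameLow r p (ofLex q)}.Finite :=
    @Set.toFinite _ _ (@Finite.Set.subset _ Set.univ _
      (@Finite.of_equiv _ _ (inferInstanceAs (Finite (Fin n → Fin n))) (toLex.trans (Equiv.Set.univ _).symm)) (Set.subset_univ _))
  obtain ⟨q, hq⟩ := hfin.exists_maximal ⟨toLex p, hp, fun _ => Iff.rfl, fun _ _ => rfl⟩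
  refine ⟨ofLex q, hq.1.1, hq.1.2, ?_⟩
  intro a b hab hlt ha
  obtain ⟨l, h1, h2, h3, h4⟩ := low_wit _ a ha
  have hlt' := Pi.lex_desc (f := ofLex q ∘ Equiv.swap a b) hab.le (by simpa using hlt)
  have heq : (ofLex q ∘ Equiv.swap a b) ∘ Equiv.swap a b = ofLex q := by
    funext x; simp
  rw [heq] at hlt'
  have := hq.2 (y := toLex (ofLex q ∘ Equiv.swap a b)) ⟨hq.1.1.comp (Equiv.bijective _),
    hq.1.2.trans (rel_swap l a b h3 h4 h1 (h1.trans hab) h2 (h2.trans hlt))⟩ hlt'.le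
  exact absurd hlt' (not_lt.2 this)

theorem alt_rel {n r : ℕ} {p p' : Fin n → Fin n} (hp : Alternating p) (h : SameLow r p p')
    (hodd : ∀ i : Fin n, RR p (r + 1) i → i.1 % 2 = 1) : Alternating p' := by
  intro i hi
  by_cases ha : RR p (r + 1) ⟨i, by omega⟩
  · have hb : ¬ RR p (r + 1) ⟨i + 1, hi⟩ := by
      intro hb
      have h1 := hodd _ ha
      have h2 := hodd _ hb
      simp only at h1 h2
      omega
    have h1 := hodd _ ha
    simp only at h1
    refine ⟨fun hc => ?_, fun hc => by omega⟩
    obtain ⟨j, x, y, z⟩ := (h.1 _).1 ha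
    refine absurd ((h.1 _).2 ⟨j, x.trans ?_, y.trans hc, z⟩) hb
    simp [Fin.lt_def]
  · by_cases hb : RR p (r + 1) ⟨i + 1, hi⟩
    · have h1 := hodd _ hb
      simp only at h1
      refine ⟨fun _ => by omega, fun _ => ?_⟩
      by_contra hc
      obtain ⟨j, x, y, z⟩ := (h.1 _).1 hb
      have hlt : p' j < p' ⟨i, by omega⟩ := y.trans_le (not_lt.1 hc)
      have hne : j.1 ≠ i := by
        intro e
        have : j = ⟨i, by omega⟩ := Fin.ext e
        rw [← this] at hlt
        exact lt_irrefl _ hlt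
      refine ha ((h.1 _).2 ⟨j, ?_, hlt, z⟩)
      rw [Fin.lt_def] at x ⊢
      simp only at x ⊢
      omega
    · rw [← h.2 _ ha, ← h.2 _ hb]
      exact hp i hi

theorem odd_S {n r : ℕ} {p : Fin n → Fin n} (hp : Bijective p) (ha : Alternating p)
    (hS : AvS r p) (i : Fin n) (hi : RR p (r + 1) i) : i.1 % 2 = 1 := by
  by_contra hc
  obtain ⟨j, x, y, z⟩ := hi
  have hx := Fin.lt_def.1 x
  have h1 := ha (i.1 - 1) (by omega)
  have e : (⟨i.1 - 1 + 1, by omega⟩ : Fin n) = i := Fin.ext (by simp only; omega)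
  rw [e] at h1
  have h2 : ¬ p ⟨i.1 - 1, by omega⟩ < p i := by rw [h1]; omega
  have hne : p ⟨i.1 - 1, by omega⟩ ≠ p i := by
    intro h
    have := congrArg Fin.val (hp.1 h)
    simp only at this
    omega
  have h3 : p i < p ⟨i.1 - 1, by omega⟩ := lt_of_le_of_ne (not_lt.1 h2) hne.symm
  have hj : j.1 ≠ i.1 - 1 := by
    intro h
    have : j = ⟨i.1 - 1, by omega⟩ := Fin.ext h
    rw [← this] at h3
    exact lt_asymm h3 y
  refine hS j ⟨i.1 - 1, by omega⟩ i z ?_ ?_ y h3 <;> rw [Fin.lt_def] <;> simp only <;> omega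

theorem odd_I {n r : ℕ} {p : Fin n → Fin n} (ha : Alternating p)
    (hI : AvI r p) (l : Fin n) (hl : l.1 = n - 1) (hlow : ¬ RR p (r + 1) l)
    (i : Fin n) (hi : RR p (r + 1) i) : i.1 % 2 = 1 := by
  by_contra hc
  have hne : i.1 ≠ n - 1 := by
    intro h
    exact hlow ((Fin.ext (h.trans hl.symm) : i = l) ▸ hi)
  have := i.2
  have h1 := (ha i.1 (by omega)).2 (by omega)
  exact hI i ⟨i.1 + 1, by omega⟩ (by simp [Fin.lt_def]) h1 hi

theorem avI_iff {n r : ℕ} (p : Fin n → Fin n) :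
    Avoids p (id : Fin (r + 3) → Fin (r + 3)) ↔ AvI r p := by
  unfold Avoids
  rw [contains_id]
  constructor
  · intro h a b hab hlt ha
    exact h ⟨b, a, hab, hlt, ha⟩
  · rintro h ⟨b, a, hab, hlt, ha⟩
    exact h a b hab hlt ha

theorem avS_iff {n r : ℕ} (p : Fin n → Fin n) :
    Avoids p ⇑(Equiv.swap (⟨r + 1, by omega⟩ : Fin (r + 3)) ⟨r + 2, by omega⟩) ↔ AvS r p := by
  unfold Avoids
  rw [contains_swap]
  constructor
  · intro h j a b h1 h2 h3 h4 h5
    exact h ⟨j, a, b, h1, h2, h3, h4, h5⟩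
  · rintro h ⟨j, a, b, h1, h2, h3, h4, h5⟩
    exact h j a b h1 h2 h3 h4 h5

theorem card_eq {n : ℕ} (r : ℕ) (hn : Odd n) (l : Fin n) (hl : l.1 = n - 1) :
    Nat.card {p : Fin n → Fin n // Bijective p ∧ Alternating p ∧ AvS r p} =
    Nat.card {p : Fin n → Fin n // (Bijective p ∧ Alternating p ∧ AvI r p) ∧
      ¬ RR p (r + 1) l} := by
  apply le_antisymm
  · have H : ∀ p : {p : Fin n → Fin n // Bijective p ∧ Alternating p ∧ AvS r p},
        ∃ q : {p : Fin n → Fin n // (Bijective p ∧ Alternating p ∧ AvI r p) ∧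
          ¬ RR p (r + 1) l}, SameLow r p.1 q.1 := by
      rintro ⟨p, hp, ha, hS⟩
      obtain ⟨q, hq, hr, hI⟩ := exists_I r p hp
      have hodd := odd_S hp ha hS
      refine ⟨⟨q, ⟨hq, alt_rel ha hr hodd, hI⟩, fun h => ?_⟩, hr⟩
      have := hodd l ((hr.1 l).2 h)
      obtain ⟨m, rfl⟩ := hn
      omega
    choose F hF using H
    apply Nat.card_le_card_of_injective F
    intro x y hxy
    refine Subtype.ext (uniq_S x.2.1 y.2.1 ((hF x).trans ?_) x.2.2.2 y.2.2.2)
    rw [hxy]; exact (hF y).symm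
  · have H : ∀ p : {p : Fin n → Fin n // (Bijective p ∧ Alternating p ∧ AvI r p) ∧
          ¬ RR p (r + 1) l},
        ∃ q : {p : Fin n → Fin n // Bijective p ∧ Alternating p ∧ AvS r p}, SameLow r p.1 q.1 := by
      rintro ⟨p, ⟨hp, ha, hI⟩, hlow⟩
      obtain ⟨q, hq, hr, hS⟩ := exists_S r p hp
      exact ⟨⟨q, hq, alt_rel ha hr (odd_I ha hI l hl hlow), hS⟩, hr⟩
    choose F hF using H
    apply Nat.card_le_card_of_injective F
    intro x y hxy
    refine Subtype.ext (uniq_I x.2.1.1 y.2.1.1 ((hF x).trans ?_) x.2.1.2.2 y.2.1.2.2)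
    rw [hxy]; exact (hF y).symm

theorem stmt12 (k n : ℕ) (hk : 3 ≤ k) (hn : Odd n) :
    Nat.card {p : Fin n → Fin n // Function.Bijective p ∧ Alternating p ∧
      Avoids p (id : Fin k → Fin k)} -
    Nat.card {p : Fin n → Fin n // Function.Bijective p ∧ Alternating p ∧
      Avoids p ⇑(Equiv.swap (⟨k - 2, by omega⟩ : Fin k) ⟨k - 1, by omega⟩)} =
    Nat.card {p : Fin n → Fin n // Function.Bijective p ∧ Alternating p ∧
      Avoids p (id : Fin k → Fin k) ∧
      rank p ⟨n - 1, by rcases hn with ⟨m, rfl⟩; omega⟩ = k - 1} := by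
  obtain ⟨r, rfl⟩ : ∃ r, k = r + 3 := ⟨k - 3, by omega⟩
  have hpos : n - 1 < n := by rcases hn with ⟨m, rfl⟩; omega
  have e2 : Nat.card {p : Fin n → Fin n // Function.Bijective p ∧ Alternating p ∧
      Avoids p ⇑(Equiv.swap (⟨r + 3 - 2, by omega⟩ : Fin (r + 3)) ⟨r + 3 - 1, by omega⟩)} =
      Nat.card {p : Fin n → Fin n // Bijective p ∧ Alternating p ∧ AvS r p} :=
    Nat.card_congr (Equiv.subtypeEquivRight fun p => by
      exact and_congr_right fun _ => and_congr_right fun _ => avS_iff p)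
  have e1 : Nat.card {p : Fin n → Fin n // Function.Bijective p ∧ Alternating p ∧
      Avoids p (id : Fin (r + 3) → Fin (r + 3))} =
      Nat.card {p : Fin n → Fin n // Bijective p ∧ Alternating p ∧ AvI r p} :=
    Nat.card_congr (Equiv.subtypeEquivRight fun p => by
      exact and_congr_right fun _ => and_congr_right fun _ => avI_iff p)
  have e3 : Nat.card {p : Fin n → Fin n // Function.Bijective p ∧ Alternating p ∧
      Avoids p (id : Fin (r + 3) → Fin (r + 3)) ∧ rank p ⟨n - 1, hpos⟩ = r + 3 - 1} =
      Nat.card {p : Fin n → Fin n // (Bijective p ∧ Alternating p ∧ AvI r p) ∧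
        RR p (r + 1) ⟨n - 1, hpos⟩} := by
    refine Nat.card_congr (Equiv.subtypeEquivRight fun p => ?_)
    rw [avI_iff, and_assoc, and_assoc]
    refine and_congr_right fun _ => and_congr_right fun _ => and_congr_right fun hI => ?_
    apply rank_eq (r := r + 1)
    rintro ⟨a, h1, h2, h3⟩
    exact hI a _ h1 h2 h3
  rw [e1, e2, e3, card_eq r hn ⟨n - 1, hpos⟩ rfl]
  have hsum : Nat.card {p : Fin n → Fin n // Bijective p ∧ Alternating p ∧ AvI r p} =
      Nat.card {p : Fin n → Fin n // (Bijective p ∧ Alternating p ∧ AvI r p) ∧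
        RR p (r + 1) ⟨n - 1, hpos⟩} +
      Nat.card {p : Fin n → Fin n // (Bijective p ∧ Alternating p ∧ AvI r p) ∧
        ¬ RR p (r + 1) ⟨n - 1, hpos⟩} := by
    classical
    rw [← Nat.card_sum]
    refine Nat.card_congr ?_
    refine (Equiv.sumCompl (fun p : {p : Fin n → Fin n // Bijective p ∧ Alternating p ∧ AvI r p} =>
      RR p.1 (r + 1) ⟨n - 1, hpos⟩)).symm.trans (Equiv.sumCongr ?_ ?_)
    · exact Equiv.subtypeSubtypeEquivSubtypeInter _ (fun p => RR p (r + 1) ⟨n - 1, hpos⟩)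
    · exact Equiv.subtypeSubtypeEquivSubtypeInter _ (fun p => ¬ RR p (r + 1) ⟨n - 1, hpos⟩)
  omega
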